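/- arXiv:1804.11033 — 7 statements merged into one kernel-verified Lean document; each statement's English description precedes it below -/
import Mathlib

section
/- Let p = (f₁ ≤ … ≤ f_N) and q = (g₁ ≤ … ≤ g_M) be vertex patterns (nondecreasing sequences of integers ≥ 3) with p ≤_emb q, and let a ∈ [0, 2π/g_M]. Then K_a(p) ≥ K_a(q). If moreover p <_emb q (i.e. M > N, or fᵢ < g_{jᵢ} for some index of the embedding), then K_a(p) > K_a(q). -/
/-- The angle defect `K_a(p) = 2π − Σᵢ 2·arcsin(cos(π/fᵢ)/cos(a/2))` of a vertex
pattern given by `f : Fin N → ℕ`. -/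
noncomputable def Kf {N : ℕ} (f : Fin N → ℕ) (a : ℝ) : ℝ :=
  2 * Real.pi - ∑ i, 2 * Real.arcsin (Real.cos (Real.pi / (f i : ℝ)) / Real.cos (a / 2))

theorem cos_pi_div_pos {n : ℕ} (hn : 3 ≤ n) : 0 < Real.cos (Real.pi / (n : ℝ)) := by
  have h3 : (3 : ℝ) ≤ n := by exact_mod_cast hn
  have hp := Real.pi_pos
  apply Real.cos_pos_of_mem_Ioo
  constructor
  · have : 0 < Real.pi / (n : ℝ) := by positivity
    linarith
  · rw [div_lt_div_iff₀ (by linarith) (by norm_num)]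
    nlinarith

theorem cos_pi_div_lt {m n : ℕ} (hm : 3 ≤ m) (h : m < n) :
    Real.cos (Real.pi / (m : ℝ)) < Real.cos (Real.pi / (n : ℝ)) := by
  have h3 : (3 : ℝ) ≤ m := by exact_mod_cast hm
  have h' : (m : ℝ) < n := by exact_mod_cast h
  have hp := Real.pi_pos
  apply Real.cos_lt_cos_of_nonneg_of_le_pi
  · have : (0 : ℝ) < n := by linarith
    positivity
  · exact div_le_self hp.le (by linarith)
  · exact div_lt_div_of_pos_left hp (by linarith) h'

theorem arcsin_term_lt {m n : ℕ} {c : ℝ} (hm : 3 ≤ m) (h : m < n)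
    (hc : Real.cos (Real.pi / (n : ℝ)) ≤ c) :
    2 * Real.arcsin (Real.cos (Real.pi / (m : ℝ)) / c) <
      2 * Real.arcsin (Real.cos (Real.pi / (n : ℝ)) / c) := by
  have h1 := cos_pi_div_pos hm
  have h2 := cos_pi_div_lt hm h
  have hc0 : 0 < c := by linarith
  have : Real.arcsin (Real.cos (Real.pi / (m : ℝ)) / c) <
      Real.arcsin (Real.cos (Real.pi / (n : ℝ)) / c) := by
    apply Real.arcsin_lt_arcsin
    · have : 0 < Real.cos (Real.pi / (m : ℝ)) / c := by positivity
      linarith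
    · exact div_lt_div_of_pos_right h2 hc0
    · exact (div_le_one hc0).2 hc
  linarith

/-- Let `p = (f₁ ≤ … ≤ f_N)` and `q = (g₁ ≤ … ≤ g_M)` be vertex patterns with
`p ≤_emb q` (witnessed by a strictly monotone `j` with `fᵢ ≤ g_{jᵢ}`), and let
`a ∈ [0, 2π/g_M]`.  Then `K_a(p) ≥ K_a(q)`; if moreover the embedding is strict
(`N < M` or some `fᵢ < g_{jᵢ}`) then `K_a(p) > K_a(q)`. -/
theorem stmt2 (N M : ℕ) (hN : 3 ≤ N) (hM : 3 ≤ M)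
    (f : Fin N → ℕ) (g : Fin M → ℕ)
    (hfmono : Monotone f) (hgmono : Monotone g)
    (hf3 : ∀ i, 3 ≤ f i) (hg3 : ∀ i, 3 ≤ g i)
    (j : Fin N → Fin M) (hj : StrictMono j) (hemb : ∀ i, f i ≤ g (j i))
    (a : ℝ) (ha : a ∈ Set.Icc (0:ℝ) (2 * Real.pi / (g ⟨M - 1, by omega⟩ : ℝ))) :
    Kf g a ≤ Kf f a ∧
      ((N < M ∨ ∃ i, f i < g (j i)) → Kf g a < Kf f a) := by
  have hp := Real.pi_pos
  have hcg : ∀ k, Real.cos (Real.pi / (g k : ℝ)) ≤ Real.cos (a / 2) := by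
    intro k
    have hk : g k ≤ g ⟨M - 1, by omega⟩ := hgmono (by
      rw [Fin.le_def]; have := k.2; simp only; omega)
    have hk' : (g k : ℝ) ≤ g ⟨M - 1, by omega⟩ := by exact_mod_cast hk
    have h3 : (3 : ℝ) ≤ g k := by exact_mod_cast hg3 k
    have h2 : Real.pi / (g ⟨M - 1, by omega⟩ : ℝ) ≤ Real.pi / (g k : ℝ) :=
      div_le_div_of_nonneg_left hp.le (by linarith) hk'
    have ha2 := ha.2
    rw [mul_div_assoc] at ha2
    apply Real.cos_le_cos_of_nonneg_of_le_pi
    · linarith [ha.1]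
    · exact div_le_self hp.le (by linarith)
    · linarith
  have hc0 : 0 < Real.cos (a / 2) :=
    lt_of_lt_of_le (cos_pi_div_pos (hg3 ⟨0, by omega⟩)) (hcg _)
  have hlt : ∀ i, f i < g (j i) → _ := fun i h => arcsin_term_lt (hf3 i) h (hcg (j i))
  have hle : ∀ i, 2 * Real.arcsin (Real.cos (Real.pi / (f i : ℝ)) / Real.cos (a / 2)) ≤
      2 * Real.arcsin (Real.cos (Real.pi / (g (j i) : ℝ)) / Real.cos (a / 2)) := by
    intro i
    rcases (hemb i).lt_or_eq with h | h
    · exact (hlt i h).le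
    · rw [h]
  have hpos : ∀ k, 0 < 2 * Real.arcsin (Real.cos (Real.pi / (g k : ℝ)) / Real.cos (a / 2)) := by
    intro k
    have := Real.arcsin_pos.2 (div_pos (cos_pi_div_pos (hg3 k)) hc0)
    linarith
  have hsum1 := Finset.sum_le_sum (s := Finset.univ) fun i _ => hle i
  have himg : ∑ i, 2 * Real.arcsin (Real.cos (Real.pi / (g (j i) : ℝ)) / Real.cos (a / 2)) =
      ∑ k ∈ Finset.univ.image j,
        2 * Real.arcsin (Real.cos (Real.pi / (g k : ℝ)) / Real.cos (a / 2)) := by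
    rw [Finset.sum_image (fun x _ y _ h => hj.injective h)]
  have hsum2 := Finset.sum_le_sum_of_subset_of_nonneg (Finset.subset_univ (Finset.univ.image j))
    fun k _ _ => (hpos k).le
  unfold Kf
  refine ⟨by linarith, ?_⟩
  rintro (h | ⟨i, hi⟩)
  · have hex : ∃ k, k ∉ Finset.univ.image j := by
      by_contra! hcon
      have h1 : Finset.univ.image j = Finset.univ := Finset.eq_univ_iff_forall.2 hcon
      have h2 := Finset.card_image_le (s := Finset.univ) (f := j)
      rw [h1] at h2
      simp at h2
      omega
    obtain ⟨k, hk⟩ := hex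
    have := Finset.sum_lt_sum_of_subset (Finset.subset_univ (Finset.univ.image j))
      (Finset.mem_univ k) hk (hpos k) fun k _ _ => (hpos k).le
    linarith
  · have := Finset.sum_lt_sum (s := Finset.univ) (fun i _ => hle i) ⟨i, Finset.mem_univ i, hlt i hi⟩
    linarith
end

section
/- Let p = (f₁ ≤ … ≤ f_N) be a vertex pattern with N ≥ 3, each fᵢ ≥ 3, and positive combinatorial curvature 1 − N/2 + Σᵢ 1/fᵢ > 0. Then the set {a ∈ [0, 2π/f_N] : K_a(p) ≥ 0} has a maximum a_c(p) > 0. Moreover: if K_{2π/f_N}(p) > 0 then a_c(p) = 2π/f_N; and if K_{2π/f_N}(p) ≤ 0 then there is a unique a ∈ (0, 2π/f_N] with K_a(p) = 0, and a_c(p) equals this unique solution. -/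
/-- Let `p = (f₁ ≤ … ≤ f_N)` be a vertex pattern with `N ≥ 3`, each `fᵢ ≥ 3`, and
positive combinatorial curvature `1 − N/2 + Σᵢ 1/fᵢ > 0`.  Then the set
`{a ∈ [0, 2π/f_N] : K_a(p) ≥ 0}` has a maximum `a_c(p) > 0`.  Moreover: if
`K_{2π/f_N}(p) > 0` then `a_c(p) = 2π/f_N`; and if `K_{2π/f_N}(p) ≤ 0` then there is
a unique `a ∈ (0, 2π/f_N]` with `K_a(p) = 0`, and `a_c(p)` equals this solution. -/
theorem stmt3 (N : ℕ) (hN : 3 ≤ N) (f : Fin N → ℕ) (hmono : Monotone f)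
    (h3 : ∀ i, 3 ≤ f i)
    (hcurv : 0 < 1 - (N : ℝ) / 2 + ∑ i, (1 : ℝ) / (f i : ℝ))
    (L : ℝ) (hL : L = 2 * Real.pi / (f ⟨N - 1, by omega⟩ : ℝ))
    (K : ℝ → ℝ)
    (hK : ∀ a, K a = 2 * Real.pi -
      ∑ i, 2 * Real.arcsin (Real.cos (Real.pi / (f i : ℝ)) / Real.cos (a / 2))) :
    ∃ ac : ℝ, IsGreatest {a : ℝ | a ∈ Set.Icc 0 L ∧ 0 ≤ K a} ac ∧ 0 < ac ∧
      (0 < K L → ac = L) ∧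
      (K L ≤ 0 →
        ac ∈ Set.Ioc 0 L ∧ K ac = 0 ∧ ∀ a ∈ Set.Ioc (0:ℝ) L, K a = 0 → a = ac) := by
  have hpi := Real.pi_pos
  have h3' : ∀ i, (3 : ℝ) ≤ f i := fun i => by exact_mod_cast h3 i
  have hLpos : 0 < L := by
    rw [hL]
    have := h3' ⟨N - 1, by omega⟩
    positivity
  have hLi : ∀ i, L / 2 ≤ Real.pi / (f i : ℝ) := by
    intro i
    have hle : f i ≤ f ⟨N - 1, by omega⟩ := hmono (by
      rw [Fin.le_def]
      have := i.2
      simp only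
      omega)
    have hle' : (f i : ℝ) ≤ f ⟨N - 1, by omega⟩ := by exact_mod_cast hle
    have hi := h3' i
    have e : L / 2 = Real.pi / (f ⟨N - 1, by omega⟩ : ℝ) := by
      rw [hL]; ring
    rw [e]
    exact div_le_div_of_nonneg_left hpi.le (by linarith) hle'
  have hi3 : ∀ i, Real.pi / (f i : ℝ) ≤ Real.pi / 3 := fun i =>
    div_le_div_of_nonneg_left hpi.le (by norm_num) (h3' i)
  have hcpos : ∀ i, 0 < Real.cos (Real.pi / (f i : ℝ)) := by
    intro i
    have h1 := hi3 i
    have h2 := hLi i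
    apply Real.cos_pos_of_mem_Ioo
    constructor <;> linarith
  have i0 : Fin N := ⟨0, by omega⟩
  have hL3 : L / 2 ≤ Real.pi / 3 := (hLi i0).trans (hi3 i0)
  have hapos : ∀ a ∈ Set.Icc 0 L, 0 < Real.cos (a / 2) := by
    rintro a ⟨h0, h1⟩
    apply Real.cos_pos_of_mem_Ioo
    constructor <;> linarith
  have hcont : ContinuousOn K (Set.Icc 0 L) := by
    have : K = fun a => 2 * Real.pi -
      ∑ i, 2 * Real.arcsin (Real.cos (Real.pi / (f i : ℝ)) / Real.cos (a / 2)) := funext hK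
    rw [this]
    refine continuousOn_const.sub (continuousOn_finset_sum _ fun i _ => ?_)
    refine continuousOn_const.mul (Real.continuous_arcsin.comp_continuousOn ?_)
    refine continuousOn_const.div (by fun_prop) fun a ha => (hapos a ha).ne'
  have hanti : StrictAntiOn K (Set.Icc 0 L) := by
    intro a ha b hb hab
    rw [hK, hK]
    apply sub_lt_sub_left
    apply Finset.sum_lt_sum_of_nonempty ⟨i0, Finset.mem_univ _⟩
    intro i _
    have hca := hapos a ha
    have hcb := hapos b hb
    have hc := hcpos i
    have hlt : Real.cos (b / 2) < Real.cos (a / 2) := by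
      apply Real.cos_lt_cos_of_nonneg_of_le_pi
      · linarith [ha.1]
      · linarith [hb.2]
      · linarith
    have hle : Real.cos (Real.pi / (f i : ℝ)) ≤ Real.cos (b / 2) := by
      apply Real.cos_le_cos_of_nonneg_of_le_pi
      · linarith [hb.1]
      · linarith [hi3 i]
      · linarith [hb.2, hLi i]
    have hx : Real.cos (Real.pi / (f i : ℝ)) / Real.cos (a / 2)
        < Real.cos (Real.pi / (f i : ℝ)) / Real.cos (b / 2) :=
      div_lt_div_of_pos_left hc hcb hlt
    have hx1 : Real.cos (Real.pi / (f i : ℝ)) / Real.cos (b / 2) ≤ 1 :=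
      (div_le_one hcb).2 hle
    have hx0 : 0 < Real.cos (Real.pi / (f i : ℝ)) / Real.cos (a / 2) := div_pos hc hca
    have := Real.arcsin_lt_arcsin (by linarith) hx hx1
    linarith
  have hK0 : 0 < K 0 := by
    have e : K 0 = 2 * Real.pi * (1 - (N : ℝ) / 2 + ∑ i, (1 : ℝ) / (f i : ℝ)) := by
      rw [hK]
      have : ∀ i, 2 * Real.arcsin (Real.cos (Real.pi / (f i : ℝ)) / Real.cos (0 / 2))
          = Real.pi - 2 * Real.pi * (1 / (f i : ℝ)) := by
        intro i
        have h1 := hi3 i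
        have h2 := hLi i
        rw [zero_div, Real.cos_zero, div_one, ← Real.sin_pi_div_two_sub,
          Real.arcsin_sin (by linarith) (by linarith)]
        ring
      rw [Finset.sum_congr rfl fun i _ => this i, Finset.sum_sub_distrib, ← Finset.mul_sum]
      simp
      ring
    rw [e]
    positivity
  have hmem0 : (0 : ℝ) ∈ Set.Icc 0 L := ⟨le_rfl, hLpos.le⟩
  have hmemL : L ∈ Set.Icc 0 L := ⟨hLpos.le, le_rfl⟩
  by_cases hKL : 0 < K L
  · exact ⟨L, ⟨⟨hmemL, hKL.le⟩, fun a ha => ha.1.2⟩, hLpos, fun _ => rfl,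
      fun h => absurd hKL (not_lt.2 h)⟩
  · have hKL' := not_lt.1 hKL
    obtain ⟨c, hc, hKc⟩ := intermediate_value_Icc' hLpos.le hcont ⟨hKL', hK0.le⟩
    have hcp : 0 < c := by
      rcases hc.1.lt_or_eq with h | h
      · exact h
      · rw [← h] at hKc
        linarith
    refine ⟨c, ⟨⟨hc, hKc.ge⟩, fun a ha => ?_⟩, hcp, fun h => absurd h hKL, fun _ =>
      ⟨⟨hcp, hc.2⟩, hKc, fun a ha h => hanti.injOn ⟨ha.1.le, ha.2⟩ hc (h.trans hKc.symm)⟩⟩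
    by_contra hlt
    have := hanti hc ha.1 (not_le.1 hlt)
    have := ha.2
    linarith
end

section
/- For every admissible vertex pattern p we have a_c(p) ≤ arccos(−1/3), and equality holds if and only if p = (3,3,3). In particular, a_c((3,3,3)) = arccos(−1/3), i.e. arccos(−1/3) is the unique a ∈ (0, 2π/3] with 6·arcsin(1/(2·cos(a/2))) = 2π. -/
/-- The critical side-length `a_c(p) = max{a ∈ [0, 2π/f_N] : K_a(p) ≥ 0}` of a
vertex pattern `f : Fin (N+1) → ℕ`. -/
noncomputable def ac {N : ℕ} (f : Fin (N + 1) → ℕ) : ℝ :=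
  sSup {a : ℝ | a ∈ Set.Icc 0 (2 * Real.pi / (f (Fin.last N) : ℝ)) ∧ 0 ≤ Kf f a}

lemma aux_A_mem : Real.pi / 2 < Real.arccos (-(1/3)) ∧ Real.arccos (-(1/3)) ≤ 2 * Real.pi / 3 := by
  constructor
  · rw [← Real.arccos_zero]
    exact Real.strictAntiOn_arccos (by constructor <;> norm_num) (by constructor <;> norm_num)
      (by norm_num)
  · have h : Real.cos (2 * Real.pi / 3) = -(1/2) := by
      have : 2 * Real.pi / 3 = Real.pi - Real.pi / 3 := by ring
      rw [this, Real.cos_pi_sub, Real.cos_pi_div_three]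
    have h2 : Real.arccos (Real.cos (2 * Real.pi / 3)) = 2 * Real.pi / 3 :=
      Real.arccos_cos (by positivity) (by linarith [Real.pi_pos])
    rw [← h2, h]
    exact Real.antitone_arccos (by norm_num)

lemma aux_cos_A : Real.cos (Real.arccos (-(1/3)) / 2) = 1 / √3 := by
  rw [Real.cos_half (by linarith [Real.arccos_nonneg (-(1/3)), Real.pi_pos]) (Real.arccos_le_pi _),
    Real.cos_arccos (by norm_num) (by norm_num)]
  rw [← Real.sqrt_one, ← Real.sqrt_div (by norm_num)]
  norm_num

lemma aux_cos_pos {a : ℝ} (h0 : 0 ≤ a) (h1 : a ≤ 2 * Real.pi / 3) : 0 < Real.cos (a / 2) :=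
  Real.cos_pos_of_mem_Ioo ⟨by linarith [Real.pi_pos], by linarith [Real.pi_pos]⟩

lemma aux_eq : (1 : ℝ) / (2 * (1 / √3)) = √3 / 2 := by
  have : 0 < √(3:ℝ) := by positivity
  field_simp

lemma aux_arcsin_A : Real.arcsin (1 / (2 * Real.cos (Real.arccos (-(1/3)) / 2))) = Real.pi / 3 := by
  rw [aux_cos_A, aux_eq, ← Real.sin_pi_div_three,
    Real.arcsin_sin (by linarith [Real.pi_pos]) (by linarith [Real.pi_pos])]

/-- From a bound on the angle to a bound on the side. -/
lemma aux_le {a b θ : ℝ} (h0 : 0 ≤ a) (h1 : a ≤ 2 * Real.pi / 3) (hb0 : 0 ≤ b)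
    (hb1 : b ≤ 2 * Real.pi / 3) (hθ0 : 0 ≤ θ) (hθ : θ < Real.pi / 2)
    (hb : 1 / (2 * Real.cos (b / 2)) = Real.sin θ)
    (h : Real.arcsin (1 / (2 * Real.cos (a / 2))) ≤ θ) : a ≤ b := by
  rw [Real.arcsin_le_iff_le_sin' ⟨by linarith [Real.pi_pos], hθ⟩, ← hb] at h
  have ha := aux_cos_pos h0 h1
  have hb' := aux_cos_pos hb0 hb1
  rw [one_div_le_one_div (by positivity) (by positivity)] at h
  by_contra! hlt
  have := Real.strictAntiOn_cos (a := b / 2) (b := a / 2)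
    ⟨by linarith, by linarith [Real.pi_pos]⟩ ⟨by linarith, by linarith [Real.pi_pos]⟩ (by linarith)
  linarith

lemma aux_K {n : ℕ} (f : Fin (n + 1) → ℕ) (hf : ∀ i, f i = 3) (a : ℝ) :
    Kf f a = 2 * Real.pi - (n + 1) * (2 * Real.arcsin (1 / (2 * Real.cos (a / 2)))) := by
  unfold Kf
  simp only [hf, Nat.cast_ofNat, Real.cos_pi_div_three, Finset.sum_const, Finset.card_univ,
    Fintype.card_fin, nsmul_eq_mul, Nat.cast_add, Nat.cast_one, div_div]

/-- For every admissible vertex pattern `p` (length `≥ 3`, entries `≥ 3`, last entry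
`≤ 41`, positive combinatorial curvature) we have `a_c(p) ≤ arccos(−1/3)`, with
equality iff `p = (3,3,3)`.  In particular `arccos(−1/3)` is the unique
`a ∈ (0, 2π/3]` with `6·arcsin(1/(2cos(a/2))) = 2π`. -/
theorem stmt5 :
    (∀ (n : ℕ), 2 ≤ n → ∀ f : Fin (n + 1) → ℕ, Monotone f → (∀ i, 3 ≤ f i) →
      f (Fin.last n) ≤ 41 →
      0 < 1 - ((n : ℝ) + 1) / 2 + ∑ i, (1 : ℝ) / (f i : ℝ) →
      ac f ≤ Real.arccos (-(1/3)) ∧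
        (ac f = Real.arccos (-(1/3)) ↔ n = 2 ∧ ∀ i, f i = 3)) ∧
    (Real.arccos (-(1/3)) ∈ Set.Ioc (0:ℝ) (2 * Real.pi / 3) ∧
      6 * Real.arcsin (1 / (2 * Real.cos (Real.arccos (-(1/3)) / 2))) = 2 * Real.pi ∧
      ∀ a ∈ Set.Ioc (0:ℝ) (2 * Real.pi / 3),
        6 * Real.arcsin (1 / (2 * Real.cos (a / 2))) = 2 * Real.pi →
          a = Real.arccos (-(1/3))) := by
  have hA := aux_A_mem
  have hpi := Real.pi_pos
  have hsin : 1 / (2 * Real.cos (Real.arccos (-(1/3)) / 2)) = Real.sin (Real.pi / 3) := by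
    rw [aux_cos_A, aux_eq, Real.sin_pi_div_three]
  refine ⟨?_, ⟨by linarith, hA.2⟩, by rw [aux_arcsin_A]; ring, ?_⟩
  · intro n hn f hmono h3 _ _
    -- a pattern other than `(3,3,3)` has critical side-length at most `π/2`
    have key : ¬ (n = 2 ∧ ∀ i, f i = 3) → ac f ≤ Real.pi / 2 := by
      intro hne
      refine Real.sSup_le ?_ (by positivity)
      rintro a ⟨⟨ha0, ha1⟩, hK⟩
      by_cases hall : ∀ i, f i = 3
      · have hn3 : 3 ≤ n := by
          by_contra hlt
          exact hne ⟨by omega, hall⟩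
        rw [hall] at ha1
        rw [aux_K f hall] at hK
        push_cast at ha1
        have hx : 0 ≤ Real.arcsin (1 / (2 * Real.cos (a / 2))) :=
          Real.arcsin_nonneg.2 (by have := aux_cos_pos ha0 ha1; positivity)
        have hn' : (3 : ℝ) ≤ n := by exact_mod_cast hn3
        refine aux_le ha0 ha1 (by positivity) (by linarith) (θ := Real.pi / 4) (by positivity)
          (by linarith) ?_ (by nlinarith)
        have e : Real.pi / 2 / 2 = Real.pi / 4 := by ring
        rw [e, Real.cos_pi_div_four, Real.sin_pi_div_four]
        have : 0 < √(2:ℝ) := by positivity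
        have h2 : √(2:ℝ) * √2 = 2 := Real.mul_self_sqrt (by norm_num)
        field_simp
        nlinarith
      · push Not at hall
        obtain ⟨i, hi⟩ := hall
        have h4 : 4 ≤ f (Fin.last n) := by
          have := hmono (Fin.le_last i)
          have := h3 i
          omega
        have h4' : (4 : ℝ) ≤ f (Fin.last n) := by exact_mod_cast h4
        refine ha1.trans ?_
        rw [div_le_div_iff₀ (by linarith) (by norm_num)]
        nlinarith
    by_cases hp : n = 2 ∧ ∀ i, f i = 3
    · have hac : ac f = Real.arccos (-(1/3)) := by
        obtain ⟨rfl, hall⟩ := hp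
        refine IsGreatest.csSup_eq ⟨⟨⟨by linarith, ?_⟩, ?_⟩, ?_⟩
        · rw [hall]; exact_mod_cast hA.2
        · rw [aux_K f hall, aux_arcsin_A]; push_cast; linarith
        · rintro a ⟨⟨ha0, ha1⟩, hK⟩
          rw [hall] at ha1
          rw [aux_K f hall] at hK
          push_cast at ha1 hK
          exact aux_le ha0 ha1 (by linarith) hA.2 (by positivity) (by linarith) hsin (by linarith)
      exact ⟨hac.le, fun _ => hp, fun _ => hac⟩
    · have := key hp
      exact ⟨by linarith, fun h => by linarith, fun h => absurd h hp⟩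
  · rintro a ⟨ha0, ha1⟩ h
    refine le_antisymm (aux_le ha0.le ha1 (by linarith) hA.2 (by positivity) (by linarith) hsin
      (by linarith)) (aux_le (by linarith) hA.2 ha0.le ha1 (θ := Real.pi / 3) (by positivity)
      (by linarith) ?_ aux_arcsin_A.le)
    have h' : Real.arcsin (1 / (2 * Real.cos (a / 2))) = Real.pi / 3 := by linarith
    exact (Real.arcsin_eq_iff_eq_sin ⟨by linarith, by linarith⟩).1 h'
end

section
/- Let f₁, f₂, f₃ be integers with 3 ≤ f₁ ≤ f₂ ≤ f₃. Then K_{2π/f₃}((f₁,f₂,f₃)) = π − 2·arcsin(cos(π/f₁)/cos(π/f₃)) − 2·arcsin(cos(π/f₂)/cos(π/f₃)), and this quantity is negative if and only if cos²(π/f₁) + cos²(π/f₂) > cos²(π/f₃), positive if and only if cos²(π/f₁) + cos²(π/f₂) < cos²(π/f₃), and zero if and only if cos²(π/f₁) + cos²(π/f₂) = cos²(π/f₃). -/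
/-- The angle defect `K_a(p) = 2π − Σ_{f ∈ p} 2·arcsin(cos(π/f)/cos(a/2))` of a
vertex pattern given as a list. -/
noncomputable def K (p : List ℕ) (a : ℝ) : ℝ :=
  2 * Real.pi -
    (p.map (fun f => 2 * Real.arcsin (Real.cos (Real.pi / (f : ℝ)) / Real.cos (a / 2)))).sum

/-- Comparison of `arcsin x + arcsin y` with `π / 2`. -/
theorem arcsin_aux (x y : ℝ) (hx0 : 0 ≤ x) (hx1 : x ≤ 1) (hy0 : 0 ≤ y) (hy1 : y ≤ 1) :
    (Real.pi - 2 * Real.arcsin x - 2 * Real.arcsin y < 0 ↔ 1 < x ^ 2 + y ^ 2) ∧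
    (0 < Real.pi - 2 * Real.arcsin x - 2 * Real.arcsin y ↔ x ^ 2 + y ^ 2 < 1) := by
  have hB0 : 0 ≤ Real.arcsin y := Real.arcsin_nonneg.2 hy0
  have hB1 : Real.arcsin y ≤ Real.pi / 2 := Real.arcsin_le_pi_div_two y
  have hmem : Real.pi / 2 - Real.arcsin y ∈ Set.Icc (-(Real.pi / 2)) (Real.pi / 2) :=
    ⟨by linarith [Real.pi_pos], by linarith⟩
  have hxm : x ∈ Set.Icc (-1 : ℝ) 1 := ⟨by linarith, hx1⟩
  have e1 := Real.lt_arcsin_iff_sin_lt hmem hxm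
  have e2 := Real.arcsin_lt_iff_lt_sin hxm hmem
  rw [Real.sin_pi_div_two_sub, Real.cos_arcsin] at e1 e2
  have hs0 := Real.sqrt_nonneg (1 - y ^ 2)
  have hs : Real.sqrt (1 - y ^ 2) ^ 2 = 1 - y ^ 2 := Real.sq_sqrt (by nlinarith)
  have g1 : Real.sqrt (1 - y ^ 2) < x ↔ 1 < x ^ 2 + y ^ 2 := by
    rw [← sq_lt_sq₀ hs0 hx0, hs]
    constructor <;> intro h <;> linarith
  have g2 : x < Real.sqrt (1 - y ^ 2) ↔ x ^ 2 + y ^ 2 < 1 := by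
    rw [← sq_lt_sq₀ hx0 hs0, hs]
    constructor <;> intro h <;> linarith
  rw [← g1, ← g2, ← e1, ← e2]
  constructor <;> constructor <;> intro h <;> linarith

/-- Let `3 ≤ f₁ ≤ f₂ ≤ f₃`.  Then
`K_{2π/f₃}((f₁,f₂,f₃)) = π − 2·arcsin(cos(π/f₁)/cos(π/f₃)) − 2·arcsin(cos(π/f₂)/cos(π/f₃))`,
and this quantity is negative iff `cos²(π/f₁) + cos²(π/f₂) > cos²(π/f₃)`, positive iff
`<`, and zero iff `=`. -/
theorem stmt6 (f1 f2 f3 : ℕ) (h1 : 3 ≤ f1) (h12 : f1 ≤ f2) (h23 : f2 ≤ f3) :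
    K [f1, f2, f3] (2 * Real.pi / (f3 : ℝ)) =
      Real.pi - 2 * Real.arcsin (Real.cos (Real.pi / (f1 : ℝ)) / Real.cos (Real.pi / (f3 : ℝ)))
        - 2 * Real.arcsin (Real.cos (Real.pi / (f2 : ℝ)) / Real.cos (Real.pi / (f3 : ℝ))) ∧
    (K [f1, f2, f3] (2 * Real.pi / (f3 : ℝ)) < 0 ↔
      Real.cos (Real.pi / (f3 : ℝ)) ^ 2 <
        Real.cos (Real.pi / (f1 : ℝ)) ^ 2 + Real.cos (Real.pi / (f2 : ℝ)) ^ 2) ∧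
    (0 < K [f1, f2, f3] (2 * Real.pi / (f3 : ℝ)) ↔
      Real.cos (Real.pi / (f1 : ℝ)) ^ 2 + Real.cos (Real.pi / (f2 : ℝ)) ^ 2 <
        Real.cos (Real.pi / (f3 : ℝ)) ^ 2) ∧
    (K [f1, f2, f3] (2 * Real.pi / (f3 : ℝ)) = 0 ↔
      Real.cos (Real.pi / (f1 : ℝ)) ^ 2 + Real.cos (Real.pi / (f2 : ℝ)) ^ 2 =
        Real.cos (Real.pi / (f3 : ℝ)) ^ 2) := by
  have hpi := Real.pi_pos
  have r1 : (3 : ℝ) ≤ f1 := by exact_mod_cast h1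
  have r12 : (f1 : ℝ) ≤ f2 := by exact_mod_cast h12
  have r23 : (f2 : ℝ) ≤ f3 := by exact_mod_cast h23
  have pos : ∀ f : ℝ, 3 ≤ f → 0 < Real.cos (Real.pi / f) := by
    intro f hf
    apply Real.cos_pos_of_mem_Ioo
    have h0 : 0 < Real.pi / f := by positivity
    have h2 : Real.pi / f < Real.pi / 2 := by
      apply div_lt_div_of_pos_left <;> linarith
    exact ⟨by linarith, h2⟩
  have mono : ∀ f g : ℝ, 3 ≤ f → f ≤ g → Real.cos (Real.pi / f) ≤ Real.cos (Real.pi / g) := by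
    intro f g hf hg
    have hg0 : 0 < g := by linarith
    apply Real.cos_le_cos_of_nonneg_of_le_pi
    · positivity
    · exact div_le_self hpi.le (by linarith)
    · exact div_le_div_of_nonneg_left hpi.le (by linarith) hg
  have p1 := pos f1 r1
  have p2 := pos f2 (by linarith)
  have p3 := pos f3 (by linarith)
  have m1 := mono f1 f3 r1 (by linarith)
  have m2 := mono f2 f3 (by linarith) r23
  have hK : K [f1, f2, f3] (2 * Real.pi / (f3 : ℝ)) =
      Real.pi - 2 * Real.arcsin (Real.cos (Real.pi / (f1 : ℝ)) / Real.cos (Real.pi / (f3 : ℝ)))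
        - 2 * Real.arcsin (Real.cos (Real.pi / (f2 : ℝ)) / Real.cos (Real.pi / (f3 : ℝ))) := by
    have ha : 2 * Real.pi / (f3 : ℝ) / 2 = Real.pi / f3 := by ring
    simp only [K, ha, List.bind_eq_flatMap, List.pure_def, List.flatMap_cons, List.flatMap_nil,
      List.cons_append, List.nil_append, List.map_cons, List.map_nil, List.sum_cons, List.sum_nil, div_self p3.ne',
      Real.arcsin_one]
    ring
  rw [hK]
  generalize Real.cos (Real.pi / (f1 : ℝ)) = a at *
  generalize Real.cos (Real.pi / (f2 : ℝ)) = b at *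
  generalize Real.cos (Real.pi / (f3 : ℝ)) = c at *
  obtain ⟨k1, k2⟩ := arcsin_aux (a / c) (b / c) (by positivity) ((div_le_one p3).2 m1)
    (by positivity) ((div_le_one p3).2 m2)
  have hsum : (a / c) ^ 2 + (b / c) ^ 2 = (a ^ 2 + b ^ 2) / c ^ 2 := by ring
  rw [hsum, one_lt_div (by positivity)] at k1
  rw [hsum, div_lt_one (by positivity)] at k2
  refine ⟨rfl, k1, k2, ?_⟩
  constructor
  · intro h
    apply le_antisymm
    · exact not_lt.1 fun h' => absurd (k1.2 h') (by linarith)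
    · exact not_lt.1 fun h' => absurd (k2.2 h') (by linarith)
  · intro h
    apply le_antisymm
    · exact not_lt.1 fun h' => absurd (k2.1 h') (by linarith)
    · exact not_lt.1 fun h' => absurd (k1.1 h') (by linarith)
end

section
/- One has π/3 < arctan 2, and the critical area of the Johnson solid J16 (10 spherical triangles and 5 spherical squares of side length π/3) satisfies 10·(3·β(3,π/3) − π) + 5·(4·β(4,π/3) − 2π) = 20·arcsin(√3/3), and 4π − 0.2568 < 20·arcsin(√3/3) < 4π − 0.2567. -/
/-- The interior angle of the regular spherical `n`-gon of side length `a`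
in the unit sphere: `β(n,a) = 2·arcsin(cos(π/n)/cos(a/2))`. -/
noncomputable def beta (n : ℕ) (a : ℝ) : ℝ :=
  2 * Real.arcsin (Real.cos (Real.pi / (n : ℝ)) / Real.cos (a / 2))

/-- Numerical bounds for `sin (3 t)` from the cubic Taylor estimate. -/
theorem sin_aux_lo : Real.sin (33983 / 100000) < 1 / 3 := by
  have h := Real.sin_bound (x := 33983 / 300000) (by rw [abs_of_pos] <;> norm_num)
  rw [abs_of_pos (by norm_num : (0:ℝ) < 33983 / 300000), abs_le] at h
  have e : (33983 / 100000 : ℝ) = 3 * (33983 / 300000) := by norm_num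
  rw [e, Real.sin_three_mul]
  obtain ⟨h1, h2⟩ := h
  generalize Real.sin (33983 / 300000) = s at *
  have h3 : s ≤ 113035 / 1000000 + 3 / 10000000 := by norm_num at h2 ⊢; linarith
  have h4 : 113034 / 1000000 ≤ s := by norm_num at h1 ⊢; linarith
  have h5 : (113034 / 1000000 : ℝ) ^ 3 ≤ s ^ 3 := by gcongr
  norm_num at h1 h2 h5 ⊢
  linarith

theorem sin_aux_hi : 1 / 3 < Real.sin (3398389 / 10000000) := by
  have h := Real.sin_bound (x := 3398389 / 30000000) (by rw [abs_of_pos] <;> norm_num)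
  rw [abs_of_pos (by norm_num : (0:ℝ) < 3398389 / 30000000), abs_le] at h
  have e : (3398389 / 10000000 : ℝ) = 3 * (3398389 / 30000000) := by norm_num
  rw [e, Real.sin_three_mul]
  obtain ⟨h1, h2⟩ := h
  generalize Real.sin (3398389 / 30000000) = s at *
  have h0 : 0 ≤ s := by norm_num at h1 ⊢; linarith
  have h3 : s ≤ 1130377 / 10000000 := by norm_num at h2 ⊢; linarith
  have h5 : s ^ 3 ≤ (1130377 / 10000000 : ℝ) ^ 3 := by gcongr
  norm_num at h1 h2 h5 ⊢
  linarith

/-- One has π/3 < arctan 2, and the critical area of the Johnson solid J16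
(10 spherical triangles and 5 spherical squares of side length π/3) satisfies
10·(3·β(3,π/3) − π) + 5·(4·β(4,π/3) − 2π) = 20·arcsin(√3/3), and
4π − 0.2568 < 20·arcsin(√3/3) < 4π − 0.2567. -/
theorem stmt14 :
    Real.pi / 3 < Real.arctan 2 ∧
    10 * (3 * beta 3 (Real.pi / 3) - Real.pi) +
      5 * (4 * beta 4 (Real.pi / 3) - 2 * Real.pi) = 20 * Real.arcsin (Real.sqrt 3 / 3) ∧
    4 * Real.pi - 2568 / 10000 < 20 * Real.arcsin (Real.sqrt 3 / 3) ∧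
    20 * Real.arcsin (Real.sqrt 3 / 3) < 4 * Real.pi - 2567 / 10000 := by
  have s3 : Real.sqrt 3 ^ 2 = 3 := Real.sq_sqrt (by norm_num)
  have s3p : 0 < Real.sqrt 3 := by positivity
  have s3lt : Real.sqrt 3 < 2 := by nlinarith
  set x := Real.arcsin (Real.sqrt 3 / 3) with hx
  have hsin : Real.sin x = Real.sqrt 3 / 3 := Real.sin_arcsin (by linarith) (by linarith)
  have hx0 : 0 ≤ x := Real.arcsin_nonneg.2 (by positivity)
  have hx1 : x ≤ Real.pi / 2 := Real.arcsin_le_pi_div_two _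
  have hcos0 : 0 ≤ Real.cos x := Real.cos_nonneg_of_mem_Icc ⟨by linarith, hx1⟩
  have hy : Real.sin (Real.pi / 2 - 2 * x) = 1 / 3 := by
    rw [Real.sin_pi_div_two_sub, Real.cos_two_mul, Real.cos_sq', hsin]
    nlinarith
  have p1 := Real.pi_gt_d20
  have p2 := Real.pi_lt_d20
  have c6 : Real.cos (Real.pi / 3 / 2) = Real.sqrt 3 / 2 := by
    rw [show Real.pi / 3 / 2 = Real.pi / 6 by ring, Real.cos_pi_div_six]
  have b3 : beta 3 (Real.pi / 3) = 2 * x := by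
    unfold beta
    rw [c6, hx]
    congr 2
    push_cast
    rw [Real.cos_pi_div_three]
    field_simp
    linarith
  have b4 : beta 4 (Real.pi / 3) = 2 * (Real.pi / 2 - x) := by
    unfold beta
    rw [c6]
    congr 1
    push_cast
    rw [Real.cos_pi_div_four]
    refine Real.arcsin_eq_of_sin_eq ?_ ⟨by linarith, by linarith⟩
    rw [Real.sin_pi_div_two_sub]
    have hc : Real.cos x ^ 2 = (Real.sqrt 2 / 2 / (Real.sqrt 3 / 2)) ^ 2 := by
      rw [Real.cos_sq', hsin, div_pow, div_pow, div_pow, div_pow, s3, Real.sq_sqrt (by norm_num)]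
      norm_num
    exact (pow_left_inj₀ hcos0 (by positivity) (by norm_num)).1 hc
  refine ⟨?_, ?_, ?_, ?_⟩
  · rw [← Real.arctan_tan (x := Real.pi / 3) (by linarith) (by linarith), Real.tan_pi_div_three]
    exact Real.arctan_lt_arctan_iff.2 s3lt
  · rw [b3, b4]; ring
  · by_contra! hc
    have := Real.sin_le_sin_of_le_of_le_pi_div_two
      (x := 3398389 / 10000000) (y := Real.pi / 2 - 2 * x) (by linarith) (by linarith) (by linarith)
    linarith [sin_aux_hi]
  · by_contra! hc
    have := Real.sin_le_sin_of_le_of_le_pi_div_two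
      (x := Real.pi / 2 - 2 * x) (y := 33983 / 100000) (by linarith) (by linarith) (by linarith)
    linarith [sin_aux_lo]
end

section
/- Let f₁ ≤ f₂ ≤ … ≤ f_N be integers with N ≥ 3 and each fᵢ ≥ 3. Then 1 − N/2 + Σᵢ 1/fᵢ > 0 if and only if there exists a ∈ (0, 2π/f_N] such that Σ_{i=1}^N 2·arcsin(cos(π/fᵢ)/cos(a/2)) ≤ 2π. -/
lemma angle_zero (n : ℕ) (hn : 3 ≤ n) :
    Real.arcsin (Real.cos (Real.pi / (n : ℝ))) = Real.pi / 2 - Real.pi * (1 / (n : ℝ)) := by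
  have hp := Real.pi_pos
  have hn' : (3 : ℝ) ≤ n := by exact_mod_cast hn
  have h1 : Real.pi / (n : ℝ) ≤ Real.pi := div_le_self hp.le (by linarith)
  have h0 : 0 < Real.pi / (n : ℝ) := by positivity
  rw [← Real.sin_pi_div_two_sub, Real.arcsin_sin (by linarith) (by linarith)]
  ring

lemma angle_sum (N : ℕ) (f : Fin N → ℕ) (h3 : ∀ i, 3 ≤ f i) :
    ∑ i, 2 * Real.arcsin (Real.cos (Real.pi / (f i : ℝ)))
      = 2 * Real.pi - 2 * Real.pi * (1 - (N : ℝ) / 2 + ∑ i, (1 : ℝ) / (f i : ℝ)) := by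
  rw [Finset.sum_congr rfl (fun i _ => by rw [angle_zero (f i) (h3 i)])]
  rw [← Finset.mul_sum, Finset.sum_sub_distrib, ← Finset.mul_sum]
  simp only [Finset.sum_const, Finset.card_univ, Fintype.card_fin, nsmul_eq_mul]
  ring

/-- Let `f₁ ≤ … ≤ f_N` be integers with `N ≥ 3` and each `fᵢ ≥ 3`.  Then the
combinatorial curvature `1 − N/2 + Σᵢ 1/fᵢ` is positive iff there exists
`a ∈ (0, 2π/f_N]` such that the total angle
`Σᵢ 2·arcsin(cos(π/fᵢ)/cos(a/2))` is at most `2π`. -/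
theorem stmt15 (N : ℕ) (hN : 3 ≤ N) (f : Fin N → ℕ) (hmono : Monotone f)
    (h3 : ∀ i, 3 ≤ f i) :
    (0 < 1 - (N : ℝ) / 2 + ∑ i, (1 : ℝ) / (f i : ℝ)) ↔
      ∃ a ∈ Set.Ioc (0:ℝ) (2 * Real.pi / (f ⟨N - 1, by omega⟩ : ℝ)),
        ∑ i, 2 * Real.arcsin (Real.cos (Real.pi / (f i : ℝ)) / Real.cos (a / 2))
          ≤ 2 * Real.pi := by
  have hp := Real.pi_pos
  have hs := angle_sum N f h3
  have h3' : ∀ i, (3 : ℝ) ≤ f i := fun i => by exact_mod_cast h3 i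
  constructor
  · intro h
    have hc : ContinuousAt (fun a : ℝ => ∑ i, 2 * Real.arcsin
        (Real.cos (Real.pi / (f i : ℝ)) / Real.cos (a / 2))) 0 := by
      refine tendsto_finsetSum _ fun i _ => ?_
      refine ContinuousAt.mul continuousAt_const ?_
      refine Real.continuous_arcsin.continuousAt.comp ?_
      refine ContinuousAt.div continuousAt_const (by fun_prop) (by simp)
    have hlt : (fun a : ℝ => ∑ i, 2 * Real.arcsin
        (Real.cos (Real.pi / (f i : ℝ)) / Real.cos (a / 2))) 0 < 2 * Real.pi := by
      simp only [zero_div, Real.cos_zero, div_one]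
      rw [hs]
      nlinarith [mul_pos hp h]
    have hev := (hc.eventually (gt_mem_nhds hlt)).filter_mono
      (nhdsWithin_le_nhds (s := Set.Ioi 0))
    have hpos : (0 : ℝ) < 2 * Real.pi / (f ⟨N - 1, by omega⟩ : ℝ) := by
      have := h3' ⟨N - 1, by omega⟩
      positivity
    obtain ⟨a, ha, ha'⟩ := (hev.and (Ioc_mem_nhdsGT hpos)).exists
    exact ⟨a, ha', ha.le⟩
  · rintro ⟨a, ⟨ha0, ha1⟩, ha⟩
    have key : ∑ i, 2 * Real.arcsin (Real.cos (Real.pi / (f i : ℝ))) <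
        ∑ i, 2 * Real.arcsin (Real.cos (Real.pi / (f i : ℝ)) / Real.cos (a / 2)) := by
      refine Finset.sum_lt_sum_of_nonempty ⟨⟨0, by omega⟩, Finset.mem_univ _⟩ fun i _ => ?_
      have hi := h3' i
      have hle : (f i : ℝ) ≤ f ⟨N - 1, by omega⟩ := by
        exact_mod_cast hmono (Fin.mk_le_mk.2 (by omega) : (⟨i.1, i.2⟩ : Fin N) ≤ _)
      have h1 : a / 2 ≤ Real.pi / (f i : ℝ) := by
        have : 2 * Real.pi / (f ⟨N - 1, by omega⟩ : ℝ) ≤ 2 * Real.pi / (f i : ℝ) :=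
          div_le_div_of_nonneg_left (by positivity) (by linarith) hle
        have e : 2 * Real.pi / (f i : ℝ) = 2 * (Real.pi / (f i : ℝ)) := by ring
        linarith
      have h2 : Real.pi / (f i : ℝ) ≤ Real.pi / 3 :=
        div_le_div_of_nonneg_left hp.le (by norm_num) hi
      have hcp : 0 < Real.cos (Real.pi / (f i : ℝ)) :=
        Real.cos_pos_of_mem_Ioo ⟨by linarith, by linarith⟩
      have hcle : Real.cos (Real.pi / (f i : ℝ)) ≤ Real.cos (a / 2) :=
        Real.cos_le_cos_of_nonneg_of_le_pi (by linarith) (by linarith) h1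
      have hc1 : Real.cos (a / 2) < 1 := by
        rw [← Real.cos_zero]
        exact Real.cos_lt_cos_of_nonneg_of_le_pi le_rfl (by linarith) (by linarith)
      have hca : 0 < Real.cos (a / 2) := by linarith
      have := Real.arcsin_lt_arcsin (x := Real.cos (Real.pi / (f i : ℝ)))
        (y := Real.cos (Real.pi / (f i : ℝ)) / Real.cos (a / 2)) (by linarith)
        (by rw [lt_div_iff₀ hca]; nlinarith) ((div_le_one hca).2 hcle)
      linarith
    rw [hs] at key
    have : 0 < 2 * Real.pi * (1 - (N : ℝ) / 2 + ∑ i, (1 : ℝ) / (f i : ℝ)) := by linarith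
    exact pos_of_mul_pos_right this (by positivity)
end

section
/- Fix an integer n ≥ 3 and set φ = arctan((1/2)·√(2 − 4·cos²(π/n) + 2·cos(π/n))). For i = 0, 1, …, 2n−1 define the unit vector Pᵢ = (sin θᵢ · cos(iπ/n), sin θᵢ · sin(iπ/n), cos θᵢ) ∈ ℝ³, where θᵢ = π/2 + (−1)ⁱ·φ. Then for all i (indices mod 2n) the Euclidean inner products satisfy ⟨Pᵢ, P_{i+1}⟩ = ⟨Pᵢ, P_{i+2}⟩; that is, the spherical distance from Pᵢ to P_{i+1} equals the spherical distance from Pᵢ to P_{i+2}, so the vertices of the n-gonal antiprism inscribed in the unit sphere span equilateral spherical triangles and two regular spherical n-gons. -/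
/-- Fix `n ≥ 3` and set `φ = arctan((1/2)·√(2 − 4cos²(π/n) + 2cos(π/n)))`.  For
`i ∈ ℤ` let `Pᵢ ∈ ℝ³` be the unit vector at colatitude `θᵢ = π/2 + (−1)ⁱφ` and
longitude `iπ/n`.  Then each `Pᵢ` is a unit vector and for all `i` the Euclidean
inner products satisfy `⟨Pᵢ, P_{i+1}⟩ = ⟨Pᵢ, P_{i+2}⟩`, i.e. the spherical distance
from `Pᵢ` to `P_{i+1}` equals that from `Pᵢ` to `P_{i+2}` (the vertices of the
`n`-gonal antiprism inscribed in the unit sphere span equilateral spherical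
triangles and two regular spherical `n`-gons). -/
theorem stmt16 (n : ℕ) (hn : 3 ≤ n) (φ : ℝ)
    (hφ : φ = Real.arctan ((1 / 2) *
      Real.sqrt (2 - 4 * Real.cos (Real.pi / (n : ℝ)) ^ 2 + 2 * Real.cos (Real.pi / (n : ℝ)))))
    (θ : ℤ → ℝ) (hθ : ∀ i, θ i = Real.pi / 2 + (-1 : ℝ) ^ i * φ)
    (P : ℤ → ℝ × ℝ × ℝ)
    (hP : ∀ i, P i = (Real.sin (θ i) * Real.cos ((i : ℝ) * Real.pi / (n : ℝ)),
                      Real.sin (θ i) * Real.sin ((i : ℝ) * Real.pi / (n : ℝ)),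
                      Real.cos (θ i)))
    (dot : ℝ × ℝ × ℝ → ℝ × ℝ × ℝ → ℝ)
    (hdot : ∀ u v, dot u v = u.1 * v.1 + u.2.1 * v.2.1 + u.2.2 * v.2.2) :
    ∀ i : ℤ, dot (P i) (P i) = 1 ∧
      dot (P i) (P (i + 1)) = dot (P i) (P (i + 2)) ∧
      Real.arccos (dot (P i) (P (i + 1))) = Real.arccos (dot (P i) (P (i + 2))) := by
  intro i
  set a := Real.pi / (n : ℝ) with ha
  have hn' : (3 : ℝ) ≤ n := by exact_mod_cast hn
  have hc0 : 0 ≤ Real.cos a := by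
    apply Real.cos_nonneg_of_neg_pi_div_two_le_of_le
    · have : 0 ≤ a := by positivity
      linarith [Real.pi_pos]
    · rw [ha]
      exact div_le_div_of_nonneg_left Real.pi_pos.le (by norm_num) (by linarith)
  have hc1 : Real.cos a ≤ 1 := Real.cos_le_one a
  have hrad : 0 ≤ 2 - 4 * Real.cos a ^ 2 + 2 * Real.cos a := by nlinarith
  have hcos : Real.cos φ ≠ 0 := by
    rw [hφ]; exact (Real.cos_arctan_pos _).ne'
  have htan : Real.tan φ ^ 2 = (2 - 4 * Real.cos a ^ 2 + 2 * Real.cos a) / 4 := by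
    rw [hφ, Real.tan_arctan, mul_pow, Real.sq_sqrt hrad]; ring
  have hsin : Real.sin φ ^ 2
      = Real.cos φ ^ 2 * ((2 - 4 * Real.cos a ^ 2 + 2 * Real.cos a) / 4) := by
    rw [← htan, Real.tan_eq_sin_div_cos]; field_simp
  have hs : ∀ j : ℤ, Real.sin (θ j) = Real.cos φ := by
    intro j
    rw [hθ, add_comm, Real.sin_add_pi_div_two]
    rcases Int.even_or_odd j with h | h
    · rw [h.neg_one_zpow, one_mul]
    · rw [h.neg_one_zpow, neg_one_mul, Real.cos_neg]
  have hk : ∀ j : ℤ, Real.cos (θ j) = -((-1 : ℝ) ^ j * Real.sin φ) := by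
    intro j
    rw [hθ, add_comm, Real.cos_add_pi_div_two]
    rcases Int.even_or_odd j with h | h
    · rw [h.neg_one_zpow, one_mul, one_mul]
    · rw [h.neg_one_zpow, neg_one_mul, neg_one_mul, Real.sin_neg]
  have he : ((-1 : ℝ) ^ i) ^ 2 = 1 := by
    rcases Int.even_or_odd i with h | h <;> rw [h.neg_one_zpow] <;> norm_num
  have hp1 : (-1 : ℝ) ^ (i + 1) = -(-1 : ℝ) ^ i := by
    rw [zpow_add₀ (by norm_num)]; norm_num
  have hp2 : (-1 : ℝ) ^ (i + 2) = (-1 : ℝ) ^ i := by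
    rw [zpow_add₀ (by norm_num)]; norm_num
  set x := (i : ℝ) * Real.pi / (n : ℝ) with hx
  have hx1 : ((i + 1 : ℤ) : ℝ) * Real.pi / (n : ℝ) = x + a := by
    rw [hx, ha]; push_cast; ring
  have hx2 : ((i + 2 : ℤ) : ℝ) * Real.pi / (n : ℝ) = x + 2 * a := by
    rw [hx, ha]; push_cast; ring
  have d1 : Real.cos x * Real.cos (x + a) + Real.sin x * Real.sin (x + a) = Real.cos a := by
    rw [← Real.cos_sub, ← Real.cos_neg]; congr 1; ring
  have d2 : Real.cos x * Real.cos (x + 2 * a) + Real.sin x * Real.sin (x + 2 * a)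
      = 2 * Real.cos a ^ 2 - 1 := by
    rw [← Real.cos_sub, ← Real.cos_two_mul, ← Real.cos_neg]; congr 1; ring
  have key : dot (P i) (P (i + 1)) = dot (P i) (P (i + 2)) := by
    rw [hdot, hdot, hP i, hP (i + 1), hP (i + 2)]
    simp only [hs, hk, hp1, hp2, hx1, hx2]
    linear_combination Real.cos φ ^ 2 * d1 - Real.cos φ ^ 2 * d2
      - 2 * Real.sin φ ^ 2 * he - 2 * hsin
  refine ⟨?_, key, by rw [key]⟩
  rw [hdot, hP i]
  simp only [hs, hk]
  linear_combination Real.cos φ ^ 2 * Real.sin_sq_add_cos_sq x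
    + Real.sin φ ^ 2 * he + Real.sin_sq_add_cos_sq φ
end
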